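/- arXiv:2005.09686 — 7 statements merged into one kernel-verified Lean document; each statement's English description precedes it below -/
import Mathlib

section
/- With respect to the canonical Poisson bracket on ℝ⁴, the invariants τ₁ = (x₁²+y₁²)/2, τ₂ = (x₂²+y₂²)/2, σ₁ = ((x₁²−y₁²)x₂ + 2x₁y₁y₂)/2, σ₂ = (2x₁y₁x₂ − (x₁²−y₁²)y₂)/2 satisfy the bracket relations {τ₁,τ₂} = 0, {τ₁,σ₁} = −2σ₂, {τ₁,σ₂} = 2σ₁, {τ₂,σ₁} = σ₂, {τ₂,σ₂} = −σ₁, and {σ₁,σ₂} = 4τ₁τ₂ − τ₁². -/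
/-- The canonical Poisson bracket on `ℝ⁴` with coordinates `(x₁, y₁, x₂, y₂)`. -/
noncomputable def poissonBracket (f g : ℝ → ℝ → ℝ → ℝ → ℝ)
    (x₁ y₁ x₂ y₂ : ℝ) : ℝ :=
  deriv (fun t => f t y₁ x₂ y₂) x₁ * deriv (fun t => g x₁ t x₂ y₂) y₁
    - deriv (fun t => f x₁ t x₂ y₂) y₁ * deriv (fun t => g t y₁ x₂ y₂) x₁
    + deriv (fun t => f x₁ y₁ t y₂) x₂ * deriv (fun t => g x₁ y₁ x₂ t) y₂
    - deriv (fun t => f x₁ y₁ x₂ t) y₂ * deriv (fun t => g x₁ y₁ t y₂) x₂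

/-- The invariant `τ₁ = (x₁² + y₁²)/2`. -/
noncomputable def invTau₁ (x₁ y₁ _x₂ _y₂ : ℝ) : ℝ := (x₁ ^ 2 + y₁ ^ 2) / 2

/-- The invariant `τ₂ = (x₂² + y₂²)/2`. -/
noncomputable def invTau₂ (_x₁ _y₁ x₂ y₂ : ℝ) : ℝ := (x₂ ^ 2 + y₂ ^ 2) / 2

/-- The invariant `σ₁ = ((x₁² − y₁²)x₂ + 2x₁y₁y₂)/2`. -/
noncomputable def invSigma₁ (x₁ y₁ x₂ y₂ : ℝ) : ℝ := ((x₁ ^ 2 - y₁ ^ 2) * x₂ + 2 * x₁ * y₁ * y₂) / 2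

/-- The invariant `σ₂ = (2x₁y₁x₂ − (x₁² − y₁²)y₂)/2`. -/
noncomputable def invSigma₂ (x₁ y₁ x₂ y₂ : ℝ) : ℝ := (2 * x₁ * y₁ * x₂ - (x₁ ^ 2 - y₁ ^ 2) * y₂) / 2

/-- Derivative of a function that is a quadratic polynomial. -/
lemma deriv_quadratic_aux {f : ℝ → ℝ} (a b c x : ℝ)
    (h : ∀ t, f t = a * t ^ 2 + b * t + c) : deriv f x = 2 * a * x + b := by
  have hf : f = fun t => a * t ^ 2 + b * t + c := funext h
  have h1 : HasDerivAt (fun t : ℝ => a * t ^ 2 + b * t + c)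
      (a * (2 * x) + b * 1) x := by
    have h2 : HasDerivAt (fun t : ℝ => t ^ 2) (2 * x) x := by
      simpa using hasDerivAt_pow 2 x
    exact ((h2.const_mul a).add ((hasDerivAt_id x).const_mul b)).add_const c
  rw [hf, h1.deriv]
  ring

/-- The Poisson bracket relations among the invariants `τ₁, τ₂, σ₁, σ₂`:
`{τ₁,τ₂} = 0`, `{τ₁,σ₁} = −2σ₂`, `{τ₁,σ₂} = 2σ₁`, `{τ₂,σ₁} = σ₂`,
`{τ₂,σ₂} = −σ₁` and `{σ₁,σ₂} = 4τ₁τ₂ − τ₁²`. -/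
theorem invariants_poisson_relations (x₁ y₁ x₂ y₂ : ℝ) :
    poissonBracket invTau₁ invTau₂ x₁ y₁ x₂ y₂ = 0 ∧
    poissonBracket invTau₁ invSigma₁ x₁ y₁ x₂ y₂ = -2 * invSigma₂ x₁ y₁ x₂ y₂ ∧
    poissonBracket invTau₁ invSigma₂ x₁ y₁ x₂ y₂ = 2 * invSigma₁ x₁ y₁ x₂ y₂ ∧
    poissonBracket invTau₂ invSigma₁ x₁ y₁ x₂ y₂ = invSigma₂ x₁ y₁ x₂ y₂ ∧
    poissonBracket invTau₂ invSigma₂ x₁ y₁ x₂ y₂ = -invSigma₁ x₁ y₁ x₂ y₂ ∧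
    poissonBracket invSigma₁ invSigma₂ x₁ y₁ x₂ y₂
      = 4 * invTau₁ x₁ y₁ x₂ y₂ * invTau₂ x₁ y₁ x₂ y₂ - (invTau₁ x₁ y₁ x₂ y₂) ^ 2 := by
  have hd00 := deriv_quadratic_aux (f := fun t => invTau₁ t y₁ x₂ y₂) (1/2) (0) (y₁^2/2) x₁
    (fun t => by simp only [invTau₁]; ring)
  have hd01 := deriv_quadratic_aux (f := fun t => invTau₁ x₁ t x₂ y₂) (1/2) (0) (x₁^2/2) y₁
    (fun t => by simp only [invTau₁]; ring)
  have hd02 := deriv_quadratic_aux (f := fun t => invTau₁ x₁ y₁ t y₂) (0) (0) ((x₁^2+y₁^2)/2) x₂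
    (fun t => by simp only [invTau₁]; ring)
  have hd03 := deriv_quadratic_aux (f := fun t => invTau₁ x₁ y₁ x₂ t) (0) (0) ((x₁^2+y₁^2)/2) y₂
    (fun t => by simp only [invTau₁]; ring)
  have hd10 := deriv_quadratic_aux (f := fun t => invTau₂ t y₁ x₂ y₂) (0) (0) ((x₂^2+y₂^2)/2) x₁
    (fun t => by simp only [invTau₂]; ring)
  have hd11 := deriv_quadratic_aux (f := fun t => invTau₂ x₁ t x₂ y₂) (0) (0) ((x₂^2+y₂^2)/2) y₁
    (fun t => by simp only [invTau₂]; ring)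
  have hd12 := deriv_quadratic_aux (f := fun t => invTau₂ x₁ y₁ t y₂) (1/2) (0) (y₂^2/2) x₂
    (fun t => by simp only [invTau₂]; ring)
  have hd13 := deriv_quadratic_aux (f := fun t => invTau₂ x₁ y₁ x₂ t) (1/2) (0) (x₂^2/2) y₂
    (fun t => by simp only [invTau₂]; ring)
  have hd20 := deriv_quadratic_aux (f := fun t => invSigma₁ t y₁ x₂ y₂) (x₂/2) (y₁*y₂) (-y₁^2*x₂/2) x₁
    (fun t => by simp only [invSigma₁]; ring)
  have hd21 := deriv_quadratic_aux (f := fun t => invSigma₁ x₁ t x₂ y₂) (-x₂/2) (x₁*y₂) (x₁^2*x₂/2) y₁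
    (fun t => by simp only [invSigma₁]; ring)
  have hd22 := deriv_quadratic_aux (f := fun t => invSigma₁ x₁ y₁ t y₂) (0) ((x₁^2-y₁^2)/2) (x₁*y₁*y₂) x₂
    (fun t => by simp only [invSigma₁]; ring)
  have hd23 := deriv_quadratic_aux (f := fun t => invSigma₁ x₁ y₁ x₂ t) (0) (x₁*y₁) ((x₁^2-y₁^2)*x₂/2) y₂
    (fun t => by simp only [invSigma₁]; ring)
  have hd30 := deriv_quadratic_aux (f := fun t => invSigma₂ t y₁ x₂ y₂) (-y₂/2) (y₁*x₂) (y₁^2*y₂/2) x₁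
    (fun t => by simp only [invSigma₂]; ring)
  have hd31 := deriv_quadratic_aux (f := fun t => invSigma₂ x₁ t x₂ y₂) (y₂/2) (x₁*x₂) (-x₁^2*y₂/2) y₁
    (fun t => by simp only [invSigma₂]; ring)
  have hd32 := deriv_quadratic_aux (f := fun t => invSigma₂ x₁ y₁ t y₂) (0) (x₁*y₁) (-(x₁^2-y₁^2)*y₂/2) x₂
    (fun t => by simp only [invSigma₂]; ring)
  have hd33 := deriv_quadratic_aux (f := fun t => invSigma₂ x₁ y₁ x₂ t) (0) (-(x₁^2-y₁^2)/2) (x₁*y₁*x₂) y₂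
    (fun t => by simp only [invSigma₂]; ring)
  simp only [poissonBracket, hd00, hd01, hd02, hd03, hd10, hd11, hd12, hd13, hd20, hd21, hd22, hd23, hd30, hd31, hd32, hd33]
  simp only [invTau₁, invTau₂, invSigma₁, invSigma₂]
  refine ⟨?_, ?_, ?_, ?_, ?_, ?_⟩ <;> ring
end

section
/- For every η ≥ 0, the Hilbert map of invariants is onto the once-reduced phase space: for every (t, s₁, s₂) ∈ ℝ³ with 0 ≤ t ≤ η and (η − t)·t² = s₁² + s₂², there exists (z₁,z₂) ∈ ℂ² with |z₁|²/2 = t, |z₁|²/2 + |z₂|² = η (i.e. H₀ = η), Re(z₁²·conj(z₂))/2 = s₁ and Im(z₁²·conj(z₂))/2 = s₂. -/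
/-- For `η ≥ 0`, the Hilbert map of invariants is onto the once-reduced phase
space `V^η`: every `(t, s₁, s₂)` with `0 ≤ t ≤ η` and `(η − t) t² = s₁² + s₂²`
is attained by some `(z₁, z₂) ∈ ℂ²` with `H₀ = |z₁|²/2 + |z₂|² = η`. -/
theorem hilbert_map_surjective (η : ℝ) (hη : 0 ≤ η) (t s₁ s₂ : ℝ)
    (ht₀ : 0 ≤ t) (htη : t ≤ η) (hsyz : (η - t) * t ^ 2 = s₁ ^ 2 + s₂ ^ 2) :
    ∃ z₁ z₂ : ℂ,
      ‖z₁‖ ^ 2 / 2 = t ∧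
      ‖z₁‖ ^ 2 / 2 + ‖z₂‖ ^ 2 = η ∧
      (z₁ ^ 2 * (starRingEnd ℂ) z₂).re / 2 = s₁ ∧
      (z₁ ^ 2 * (starRingEnd ℂ) z₂).im / 2 = s₂ := by
  rcases ht₀.eq_or_lt with h | h
  · subst h
    have h1 : s₁ = 0 := by nlinarith [sq_nonneg s₁, sq_nonneg s₂]
    have h2 : s₂ = 0 := by nlinarith [sq_nonneg s₁, sq_nonneg s₂]
    subst h1 h2
    refine ⟨0, ((Real.sqrt η : ℝ) : ℂ), ?_, ?_, ?_, ?_⟩ <;> simp [Real.sq_sqrt hη]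
  · have ht : t ≠ 0 := h.ne'
    have hs : Real.sqrt (2 * t) ^ 2 = 2 * t := Real.sq_sqrt (by linarith)
    have hz : ((Real.sqrt (2 * t) : ℝ) : ℂ) ^ 2 = ((2 * t : ℝ) : ℂ) := by
      rw [← Complex.ofReal_pow, hs]
    have hn : ‖((Real.sqrt (2 * t) : ℝ) : ℂ)‖ ^ 2 = 2 * t := by
      rw [Complex.norm_real, Real.norm_eq_abs, sq_abs, hs]
    refine ⟨((Real.sqrt (2 * t) : ℝ) : ℂ), ⟨s₁ / t, -s₂ / t⟩, ?_, ?_, ?_, ?_⟩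
    · rw [hn]; ring
    · rw [hn, Complex.sq_norm, Complex.normSq_mk]
      have : s₁ / t * (s₁ / t) + -s₂ / t * (-s₂ / t) = η - t := by
        field_simp
        linarith
      rw [this]; ring
    · rw [hz, Complex.re_ofReal_mul, Complex.conj_re]
      field_simp
    · rw [hz, Complex.im_ofReal_mul, Complex.conj_im]
      field_simp
end

section
/- For every η ≥ 0, the second reduction map is onto P^η: for every (u,v,w) ∈ ℝ³ with 0 ≤ u ≤ η and S^η(u,v,w) = 0 there exist (σ₁,σ₂) ∈ ℝ² with (η−u)u² = σ₁² + σ₂², (σ₁² − σ₂²)/2 = v and σ₁σ₂ = w; in particular (u,σ₁,σ₂) lies in V^η and is mapped to (u,v,w). -/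
/-- For `η ≥ 0` the second reduction map is onto `P^η`: for every `(u,v,w)`
with `0 ≤ u ≤ η` and `S^η(u,v,w) = (η−u)²u⁴/2 − 2(v²+w²) = 0` there exist
`(σ₁, σ₂) ∈ ℝ²` with `(η−u)u² = σ₁² + σ₂²`, `(σ₁² − σ₂²)/2 = v` and
`σ₁σ₂ = w`; in particular `(u, σ₁, σ₂)` lies in `V^η` and maps to `(u,v,w)`. -/
theorem second_reduction_surjective (η u v w : ℝ) (hη : 0 ≤ η)
    (h₀ : 0 ≤ u) (huη : u ≤ η)
    (hS : (η - u) ^ 2 * u ^ 4 / 2 - 2 * (v ^ 2 + w ^ 2) = 0) :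
    ∃ σ₁ σ₂ : ℝ,
      (η - u) * u ^ 2 = σ₁ ^ 2 + σ₂ ^ 2 ∧
      (σ₁ ^ 2 - σ₂ ^ 2) / 2 = v ∧
      σ₁ * σ₂ = w := by
  have hR : 0 ≤ (η - u) * u ^ 2 := mul_nonneg (sub_nonneg.2 huη) (sq_nonneg u)
  have hR2 : ((η - u) * u ^ 2) ^ 2 = 4 * (v ^ 2 + w ^ 2) := by linear_combination 2 * hS
  generalize (η - u) * u ^ 2 = R at hR hR2 ⊢
  have hv : |v| ≤ R / 2 := abs_le_of_sq_le_sq (by nlinarith [sq_nonneg w] : v ^ 2 ≤ (R / 2) ^ 2) (by linarith)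
  obtain ⟨h1, h2⟩ := abs_le.1 hv
  have ha : √(R / 2 + v) ^ 2 = R / 2 + v := Real.sq_sqrt (by linarith)
  have hb : √(R / 2 - v) ^ 2 = R / 2 - v := Real.sq_sqrt (by linarith)
  have hab : (√(R / 2 + v) * √(R / 2 - v)) ^ 2 = w ^ 2 := by
    rw [mul_pow, ha, hb]; linear_combination hR2 / 4
  rcases sq_eq_sq_iff_eq_or_eq_neg.1 hab with h | h
  · exact ⟨√(R / 2 + v), √(R / 2 - v), by linarith, by linarith, h⟩
  · refine ⟨√(R / 2 + v), -√(R / 2 - v), ?_, ?_, by linarith⟩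
    · rw [neg_sq]; linarith
    · rw [neg_sq]; linarith
end

section
/- Let η > 0, δ, α ∈ ℝ, λ ≠ 0, set u₀ = −(2δ + αη)/(2λ) and K(u,v,w) = (2δ + αη)u + λu². If u₀ ∉ [0,η], then the level set of K through each singular point meets P^η only in that point: {p ∈ P^η : K(p) = K(Q₁)} = {Q₁} and {p ∈ P^η : K(p) = K(Q₂)} = {Q₂}, where Q₁ = (0,0,0) and Q₂ = (η,0,0). (Hence both normal modes are stable outside the closure of the set D_λ^α.) -/
/-- The defining function `S^η(u,v,w) = (η−u)²u⁴/2 − 2(v² + w²)` of the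
twice-reduced phase space. -/
noncomputable def Sred (η : ℝ) (p : ℝ × ℝ × ℝ) : ℝ :=
  (η - p.1) ^ 2 * p.1 ^ 4 / 2 - 2 * (p.2.1 ^ 2 + p.2.2 ^ 2)

/-- For `K = (2δ + αη)u + λu²` with `u₀ = −(2δ + αη)/(2λ) ∉ [0,η]`, the level
set of `K` through each singular point `Q₁ = (0,0,0)`, `Q₂ = (η,0,0)` meets
`P^η` only in that point — hence both normal modes are stable outside the
closure of `D_λ^α`. -/
theorem normal_modes_stable_outside (η δ α l : ℝ) (hη : 0 < η) (hl : l ≠ 0)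
    (hu₀ : -(2 * δ + α * η) / (2 * l) ∉ Set.Icc 0 η) :
    {p : ℝ × ℝ × ℝ | Sred η p = 0 ∧ 0 ≤ p.1 ∧ p.1 ≤ η ∧
        (2 * δ + α * η) * p.1 + l * p.1 ^ 2
          = (2 * δ + α * η) * (0 : ℝ) + l * (0 : ℝ) ^ 2}
      = {((0 : ℝ), (0 : ℝ), (0 : ℝ))} ∧
    {p : ℝ × ℝ × ℝ | Sred η p = 0 ∧ 0 ≤ p.1 ∧ p.1 ≤ η ∧
        (2 * δ + α * η) * p.1 + l * p.1 ^ 2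
          = (2 * δ + α * η) * η + l * η ^ 2}
      = {(η, (0 : ℝ), (0 : ℝ))} := by
  have key : ∀ x y : ℝ, 0 ≤ x → x ≤ η → 0 ≤ y → y ≤ η →
      (2 * δ + α * η) * x + l * x ^ 2 = (2 * δ + α * η) * y + l * y ^ 2 → x = y := by
    intro x y hx hx' hy hy' h
    by_contra hne
    have h1 : (2 * δ + α * η) + l * (x + y) = 0 := by
      apply mul_left_cancel₀ (sub_ne_zero.mpr hne)
      linear_combination h
    have h2 : -(2 * δ + α * η) / (2 * l) = (x + y) / 2 := by
      field_simp
      linear_combination -h1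
    apply hu₀
    rw [h2]
    constructor <;> linarith
  have vw : ∀ v w : ℝ, v ^ 2 + w ^ 2 = 0 → v = 0 ∧ w = 0 := by
    intro v w h
    constructor
    · exact pow_eq_zero_iff (two_ne_zero) |>.mp (by nlinarith [sq_nonneg v, sq_nonneg w])
    · exact pow_eq_zero_iff (two_ne_zero) |>.mp (by nlinarith [sq_nonneg v, sq_nonneg w])
  constructor
  · ext ⟨u, v, w⟩
    simp only [Set.mem_setOf_eq, Set.mem_singleton_iff, Prod.mk.injEq, Sred]
    constructor
    · rintro ⟨hS, h0, h1, hK⟩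
      have hu := key u 0 h0 h1 le_rfl hη.le hK
      subst hu
      exact ⟨rfl, vw v w (by linarith)⟩
    · rintro ⟨rfl, rfl, rfl⟩
      refine ⟨by ring, le_rfl, hη.le, rfl⟩
  · ext ⟨u, v, w⟩
    simp only [Set.mem_setOf_eq, Set.mem_singleton_iff, Prod.mk.injEq, Sred]
    constructor
    · rintro ⟨hS, h0, h1, hK⟩
      have hu := key u η h0 h1 hη.le le_rfl hK
      subst hu
      exact ⟨rfl, vw v w (by linarith)⟩
    · rintro ⟨rfl, rfl, rfl⟩
      refine ⟨by ring, hη.le, le_rfl, rfl⟩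
end

section
/- Let η > 0, let f : ℝ → ℝ be differentiable, let c ≠ 0, let K(u,v,w) = f(u) + c·v, and let s ∈ {+1,−1}. Then the point p = (u, s·(η−u)u²/2, 0) ∈ P^η with 0 < u < η is an equilibrium of the reduced vector field X_K = ∇K × ∇S^η if and only if f′(u) = −s·c·u(2η − 3u)/2; equivalently, if and only if the slope of the level curve of K coincides with the slope of the contour v = s(η−u)u²/2 of P^η at u (tangency condition). -/
/-- The gradient of a function on `ℝ³ = ℝ × ℝ × ℝ`, computed coordinatewise. -/
noncomputable def grad3 (f : ℝ × ℝ × ℝ → ℝ) (p : ℝ × ℝ × ℝ) : ℝ × ℝ × ℝ :=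
  (deriv (fun t => f (t, p.2.1, p.2.2)) p.1,
   deriv (fun t => f (p.1, t, p.2.2)) p.2.1,
   deriv (fun t => f (p.1, p.2.1, t)) p.2.2)

/-- The cross product on `ℝ³ = ℝ × ℝ × ℝ`. -/
def cross3 (a b : ℝ × ℝ × ℝ) : ℝ × ℝ × ℝ :=
  (a.2.1 * b.2.2 - a.2.2 * b.2.1,
   a.2.2 * b.1 - a.1 * b.2.2,
   a.1 * b.2.1 - a.2.1 * b.1)

/-- Tangency condition for regular equilibria: for `K(u,v,w) = f(u) + c·v`,
`c ≠ 0`, and a sign `s = ±1`, the point `(u, s(η−u)u²/2, 0)` of `P^η` with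
`0 < u < η` is an equilibrium of `X_K = ∇K × ∇S^η` iff
`f′(u) = −s·c·u(2η − 3u)/2`. -/
theorem tangency_condition (η : ℝ) (hη : 0 < η)
    (f : ℝ → ℝ) (hf : Differentiable ℝ f) (c : ℝ) (hc : c ≠ 0)
    (s : ℝ) (hs : s = 1 ∨ s = -1) (u : ℝ) (h₀ : 0 < u) (huη : u < η) :
    cross3
        (grad3 (fun q => f q.1 + c * q.2.1) (u, s * (η - u) * u ^ 2 / 2, 0))
        (grad3 (Sred η) (u, s * (η - u) * u ^ 2 / 2, 0)) = 0
      ↔ deriv f u = -s * c * u * (2 * η - 3 * u) / 2 := by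
  have hv : ∀ v : ℝ, deriv (fun t : ℝ => (η - u) ^ 2 * u ^ 4 / 2 - 2 * (t ^ 2 + (0 : ℝ) ^ 2)) v
      = -4 * v := by
    intro v
    have h := ((((hasDerivAt_id v).pow 2).add_const ((0 : ℝ) ^ 2)).const_mul 2).const_sub
      ((η - u) ^ 2 * u ^ 4 / 2)
    refine (h.congr_deriv ?_).deriv
    simp
    ring
  have hw : ∀ v : ℝ, deriv (fun t : ℝ => (η - u) ^ 2 * u ^ 4 / 2 - 2 * (v ^ 2 + t ^ 2)) 0
      = 0 := by
    intro v
    have h := ((((hasDerivAt_id (0 : ℝ)).pow 2).const_add (v ^ 2)).const_mul 2).const_sub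
      ((η - u) ^ 2 * u ^ 4 / 2)
    refine (h.congr_deriv ?_).deriv
    simp
  have hu : ∀ v : ℝ, deriv (fun t : ℝ => (η - t) ^ 2 * t ^ 4 / 2 - 2 * (v ^ 2 + (0 : ℝ) ^ 2)) u
      = (η - u) * u ^ 3 * (2 * η - 3 * u) := by
    intro v
    have h := (((((hasDerivAt_id u).const_sub η).pow 2).mul
      ((hasDerivAt_id u).pow 4)).div_const 2).sub_const (2 * (v ^ 2 + (0 : ℝ) ^ 2))
    refine (h.congr_deriv ?_).deriv
    simp
    ring
  have hK1 : ∀ v : ℝ, deriv (fun t : ℝ => f t + c * v) u = deriv f u := fun v =>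
    ((hf u).hasDerivAt.add_const (c * v)).deriv
  have hK2 : ∀ v : ℝ, deriv (fun t : ℝ => f u + c * t) v = c := by
    intro v
    refine ((((hasDerivAt_id v).const_mul c).const_add (f u)).congr_deriv ?_).deriv
    simp
  have hne : (η - u) * u ^ 2 ≠ 0 := by
    have : 0 < η - u := sub_pos.mpr huη
    positivity
  have hss : s * s = 1 := by rcases hs with rfl | rfl <;> norm_num
  simp only [cross3, grad3, Sred, hv, hw, hu, hK1, hK2, deriv_const, Prod.mk_eq_zero]
  constructor
  · rintro ⟨-, -, h⟩
    have h2 : (η - u) * u ^ 2 * (-2 * s * deriv f u - c * u * (2 * η - 3 * u)) = 0 := by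
      linear_combination h
    have h3 := (mul_eq_zero.mp h2).resolve_left hne
    linear_combination (-s / 2) * h3 - deriv f u * hss
  · intro h
    refine ⟨by ring, by ring, ?_⟩
    rw [h]
    linear_combination (c * u * (2 * η - 3 * u) * ((η - u) * u ^ 2)) * hss
end

section
/- Let η > 0, c ≠ 0, and let F : ℝ → ℝ be differentiable at 0 with F′(0) ≠ 0. Set K(u,v,w) = F(u) + c·v. Then there exists ρ > 0 such that the only point p = (u,v,w) ∈ P^η with ‖p‖ < ρ and K(p) = F(0) = K(Q₁) is p = Q₁ = (0,0,0). (Thus the short normal mode Q₁, sitting at the cusp singularity of P^η, is isolated in its own level set, hence stable, whenever the level curve of K passes through the origin with non-vanishing slope.) -/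
/-- Stability of the short normal mode `Q₁ = (0,0,0)` at the cusp of `P^η`:
if `K(u,v,w) = F(u) + c·v` with `c ≠ 0` and `F′(0) ≠ 0`, then `Q₁` is isolated
in its own level set `{K = K(Q₁)} ∩ P^η`. -/
theorem short_mode_stable (η : ℝ) (hη : 0 < η) (c : ℝ) (hc : c ≠ 0)
    (F : ℝ → ℝ) (hF : DifferentiableAt ℝ F 0) (hF' : deriv F 0 ≠ 0) :
    ∃ ρ > 0, ∀ p : ℝ × ℝ × ℝ, Sred η p = 0 → 0 ≤ p.1 → p.1 ≤ η →
      ‖p‖ < ρ → F p.1 + c * p.2.1 = F 0 → p = ((0 : ℝ), (0 : ℝ), (0 : ℝ)) := by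
  have hd := hF.hasDerivAt
  rw [hasDerivAt_iff_isLittleO] at hd
  have ha : 0 < |deriv F 0| := abs_pos.mpr hF'
  have hcp : 0 < |c| := abs_pos.mpr hc
  have hb := hd.def (half_pos ha)
  obtain ⟨δ, hδ, hball⟩ := Metric.eventually_nhds_iff.mp hb
  refine ⟨min δ (|deriv F 0| / (|c| * η)), lt_min hδ (by positivity), ?_⟩
  rintro ⟨u, v, w⟩ hS hu huη hp hK
  simp only [Sred] at hS hu huη hK
  have hun : |u| < min δ (|deriv F 0| / (|c| * η)) :=
    lt_of_le_of_lt (norm_fst_le (u, v, w)) hp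
  have h1 : |u| < δ := lt_of_lt_of_le hun (min_le_left _ _)
  have h2 : |u| < |deriv F 0| / (|c| * η) := lt_of_lt_of_le hun (min_le_right _ _)
  have h3 := hball (y := u) (by simpa [Real.dist_eq] using h1)
  simp only [sub_zero, smul_eq_mul, Real.norm_eq_abs] at h3
  rw [abs_of_nonneg hu] at h2 h3
  rw [lt_div_iff₀ (by positivity)] at h2
  have hv : |v| ≤ η * u ^ 2 / 2 := by
    refine abs_le_of_sq_le_sq ?_ (by positivity)
    have h5 : (η - u) ^ 2 ≤ η ^ 2 := by nlinarith
    have h6 : (η - u) ^ 2 * u ^ 4 ≤ η ^ 2 * u ^ 4 := by gcongr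
    nlinarith [sq_nonneg w]
  have hu0 : u = 0 := by
    by_contra hne
    have hup : 0 < u := lt_of_le_of_ne hu (Ne.symm hne)
    have e : F u - F 0 - u * deriv F 0 = -(c * v + u * deriv F 0) := by linarith
    rw [e, abs_neg] at h3
    have h7 : |u * deriv F 0| ≤ |c * v + u * deriv F 0| + |c * v| := by
      have := abs_sub (c * v + u * deriv F 0) (c * v)
      simpa using this
    rw [abs_mul, abs_mul, abs_of_pos hup] at h7
    have h8 : |c| * |v| ≤ |c| * (η * u ^ 2 / 2) := by gcongr
    have h9 : u * (u * (|c| * η)) < u * |deriv F 0| := by gcongr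
    nlinarith
  subst hu0
  have hv0 : v = 0 := by nlinarith [sq_nonneg v, sq_nonneg w]
  have hw0 : w = 0 := by nlinarith [sq_nonneg v, sq_nonneg w]
  rw [hv0, hw0]
end

section
/- Let η > 0, c ≠ 0, and let F : ℝ → ℝ be differentiable at η with |F′(η)| > |c|·η²/2. Set K(u,v,w) = F(u) + c·v. Then there exists ρ > 0 such that the only point p = (u,v,w) ∈ P^η with ‖p − Q₂‖ < ρ and K(p) = F(η) = K(Q₂) is p = Q₂ = (η,0,0). (Thus the long normal mode Q₂, sitting at the conical singularity of P^η, is isolated in its own level set, hence stable, whenever the slope of the level curve of K at u = η lies outside the interval [−η²/2, η²/2] determined by the two contour lines of P^η.) -/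
/-- Stability of the long normal mode `Q₂ = (η,0,0)` at the conical singularity
of `P^η`: if `K(u,v,w) = F(u) + c·v` with `c ≠ 0` and `|F′(η)| > |c|·η²/2`
(the slope at `u = η` lies outside the interval determined by the two contour
lines of `P^η`), then `Q₂` is isolated in its own level set
`{K = K(Q₂)} ∩ P^η`. -/
theorem long_mode_stable (η : ℝ) (hη : 0 < η) (c : ℝ) (hc : c ≠ 0)
    (F : ℝ → ℝ) (hF : DifferentiableAt ℝ F η)
    (hF' : |deriv F η| > |c| * η ^ 2 / 2) :
    ∃ ρ > 0, ∀ p : ℝ × ℝ × ℝ, Sred η p = 0 → 0 ≤ p.1 → p.1 ≤ η →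
      ‖p - (η, (0 : ℝ), (0 : ℝ))‖ < ρ → F p.1 + c * p.2.1 = F η →
      p = (η, (0 : ℝ), (0 : ℝ)) := by
  have hd := hF.hasDerivAt
  rw [hasDerivAt_iff_isLittleO] at hd
  have hε : 0 < (|deriv F η| - |c| * η ^ 2 / 2) / 2 := by linarith
  have hb := hd.def hε
  obtain ⟨ρ, hρ, h⟩ := Metric.eventually_nhds_iff.1 hb
  refine ⟨ρ, hρ, ?_⟩
  rintro ⟨u, v, w⟩ hS h0 h1 hn hK
  simp only [Sred] at hS h0 h1 hK
  have hun : dist u η < ρ := by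
    rw [Real.dist_eq, ← Real.norm_eq_abs]
    exact lt_of_le_of_lt (norm_fst_le ((u, v, w) - (η, (0 : ℝ), (0 : ℝ)))) hn
  have hu := h hun
  simp only [smul_eq_mul, Real.norm_eq_abs] at hu
  have hx : 0 ≤ η - u := by linarith
  have hv : |v| ≤ (η - u) * η ^ 2 / 2 := by
    have h2 : |v| ≤ (η - u) * u ^ 2 / 2 := by
      refine abs_le_of_sq_le_sq ?_ (by positivity)
      nlinarith [sq_nonneg w]
    have h3 : u ^ 2 ≤ η ^ 2 := by gcongr
    have := mul_le_mul_of_nonneg_left h3 hx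
    linarith
  have hue : u = η := by
    by_contra hne
    have hpos : 0 < η - u := lt_of_le_of_ne hx (fun h => hne (by linarith))
    have e1 : |u - η| = η - u := by rw [abs_sub_comm, abs_of_nonneg hx]
    have e2 : |(u - η) * deriv F η| = (η - u) * |deriv F η| := by rw [abs_mul, e1]
    have e3 : F u - F η = - (c * v) := by linarith
    rw [e1, e3] at hu
    have e4 : |c * v| ≤ |c| * ((η - u) * η ^ 2 / 2) := by
      rw [abs_mul]; gcongr
    have e5 : |(u - η) * deriv F η| ≤ |c * v| + |-(c * v) - (u - η) * deriv F η| := by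
      have := abs_sub (-(c * v)) (-(c * v) - (u - η) * deriv F η)
      rw [abs_neg] at this
      simpa using this
    rw [e2] at e5
    nlinarith [mul_pos hpos hε]
  subst hue
  have hv0 : v = 0 := by nlinarith [sq_nonneg v, sq_nonneg w]
  have hw0 : w = 0 := by nlinarith [sq_nonneg v, sq_nonneg w]
  rw [hv0, hw0]
end
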